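/- Let H ∈ {0,1}^{n×k} be a partition indicator matrix, let a, b ≥ 0, let Ω = (a − b)·I_k + b·1 1ᵀ, and let E = H Ω Hᵀ be the expected adjacency matrix of the corresponding planted partition model. Let M ∈ {0,1}^{k×κ} be any partition indicator matrix merging the k groups into κ nonempty supergroups, and set H' = H M ∈ {0,1}^{n×κ}. Then H' is an externally equitable partition of E, i.e. L(E) H' = H' (H'† L(E) H') where L(E) = diag(E·1) − E. In particular, every coarsening of the planted partition is an EEP of E, so all ways of merging the groups are equivalent (degenerate hierarchy). -/

import Mathlib

open Matrix BigOperators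

/-!
Write `f` for the map sending a vertex to its supergroup. Since
`(L(E) X) i t = ∑ j, E i j * (X i t - X j t)`, the entries of `E` inside the classes of `f` do not
affect `L(E) H'`. In a planted partition model all the other entries are equal to `b`, so that
`L(E) H' = L(b 𝟙𝟙ᵀ) H' = b (n H' - 𝟙𝟙ᵀ H')`, and because `𝟙 = H' 𝟙` this is `H' X` for
`X = b (n I - 𝟙𝟙ᵀ H')`. Finally `H'† H' = I` forces `X = H'† L(E) H'`.
-/

section Definitions

variable {V ι R : Type*}

/-- The indicator matrix of the partition of `V` into the fibres of `f`. A partition is encoded by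
its labelling function `f`; all groups are nonempty exactly when `f` is surjective. -/
def partitionIndicator (R : Type*) [Zero R] [One R] [DecidableEq ι] (f : V → ι) : Matrix V ι R :=
  of fun i r => if f i = r then 1 else 0

variable [Fintype V]

/-- The Laplacian `L(E) = diag(E 𝟙) - E` of a weighted adjacency matrix `E`, which may have
nonzero diagonal entries. -/
def weightedLaplacian [AddCommGroup R] [DecidableEq V] (E : Matrix V V R) : Matrix V V R :=
  diagonal (fun i => ∑ j, E i j) - E

variable [Fintype ι] [DecidableEq ι] [CommRing R]

/-- The pseudoinverse `P† = (Pᵀ P)⁻¹ Pᵀ` of a matrix with linearly independent columns; it is `0`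
when `det (Pᵀ P)` is not a unit. -/
noncomputable def columnPseudoinverse (P : Matrix V ι R) : Matrix ι V R :=
  (Pᵀ * P)⁻¹ * Pᵀ

/-- `P` is an externally equitable partition of `E`: `L(E) P = P L^π` for the quotient Laplacian
`L^π = P† L(E) P`. -/
def IsExternallyEquitable [DecidableEq V] (E : Matrix V V R) (P : Matrix V ι R) : Prop :=
  weightedLaplacian E * P = P * (columnPseudoinverse P * weightedLaplacian E * P)

end Definitions

section Pseudoinverse

variable {V ι R : Type*} [Fintype V] [Fintype ι] [DecidableEq ι] [CommRing R]

theorem columnPseudoinverse_mul_self {P : Matrix V ι R} (hP : IsUnit (Pᵀ * P).det) :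
    columnPseudoinverse P * P = 1 := by
  rw [columnPseudoinverse, Matrix.mul_assoc, nonsing_inv_mul _ hP]

theorem isExternallyEquitable_iff_exists_mul [DecidableEq V] {E : Matrix V V R} {P : Matrix V ι R}
    (hP : IsUnit (Pᵀ * P).det) :
    IsExternallyEquitable E P ↔ ∃ X : Matrix ι ι R, weightedLaplacian E * P = P * X := by
  refine ⟨fun h => ⟨_, h⟩, fun ⟨X, hX⟩ => ?_⟩
  have hquotient : columnPseudoinverse P * weightedLaplacian E * P = X := by
    rw [Matrix.mul_assoc, hX, ← Matrix.mul_assoc, columnPseudoinverse_mul_self hP, Matrix.one_mul]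
  rw [IsExternallyEquitable, hquotient, hX]

end Pseudoinverse

section Indicator

variable {V W ι κ R : Type*} [DecidableEq ι]

theorem partitionIndicator_mul [NonAssocSemiring R] [Fintype ι] (f : V → ι) (X : Matrix ι W R) :
    partitionIndicator R f * X = X.submatrix f id := by
  ext i w
  simp [partitionIndicator, Matrix.mul_apply]

theorem mul_transpose_partitionIndicator [NonAssocSemiring R] [Fintype ι] (X : Matrix W ι R)
    (f : V → ι) : X * (partitionIndicator R f)ᵀ = X.submatrix id f := by
  ext w i
  simp [partitionIndicator, Matrix.mul_apply]

theorem partitionIndicator_mul_partitionIndicator [NonAssocSemiring R] [Fintype ι] [DecidableEq κ]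
    (g : V → ι) (m : ι → κ) :
    partitionIndicator R g * partitionIndicator R m = partitionIndicator R (m ∘ g) :=
  partitionIndicator_mul g _

variable [Fintype V]

theorem transpose_partitionIndicator_mul_self [NonAssocSemiring R] (f : V → ι) :
    (partitionIndicator R f)ᵀ * partitionIndicator R f =
      diagonal fun r => (Finset.card {i | f i = r} : R) := by
  ext r s
  by_cases hrs : r = s
  · subst hrs
    simp [partitionIndicator, Matrix.mul_apply, ← ite_and]
  · simp +contextual [partitionIndicator, Matrix.mul_apply, hrs, Ne.symm hrs]

theorem isUnit_det_transpose_partitionIndicator_mul_self [Field R] [CharZero R] [Fintype ι]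
    {f : V → ι} (hf : Function.Surjective f) :
    IsUnit ((partitionIndicator R f)ᵀ * partitionIndicator R f).det := by
  rw [transpose_partitionIndicator_mul_self, det_diagonal, isUnit_iff_ne_zero,
    Finset.prod_ne_zero_iff]
  intro r _
  obtain ⟨i, hi⟩ := hf r
  exact Nat.cast_ne_zero.mpr (Finset.card_ne_zero_of_mem (Finset.mem_filter_univ i |>.mpr hi))

end Indicator

section Laplacian

variable {V W κ R : Type*} [Fintype V] [DecidableEq V]

theorem weightedLaplacian_mul_apply [NonUnitalNonAssocRing R] (E : Matrix V V R) (X : Matrix V W R)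
    (i : V) (w : W) : (weightedLaplacian E * X) i w = ∑ j, E i j * (X i w - X j w) := by
  rw [weightedLaplacian, Matrix.sub_mul, Matrix.sub_apply, diagonal_mul, Matrix.mul_apply,
    Finset.sum_mul, ← Finset.sum_sub_distrib]
  simp only [mul_sub]

variable [DecidableEq κ] [NonAssocRing R]

theorem weightedLaplacian_mul_partitionIndicator_congr {E F : Matrix V V R} {f : V → κ}
    (hEF : ∀ i j, f i ≠ f j → E i j = F i j) :
    weightedLaplacian E * partitionIndicator R f =
      weightedLaplacian F * partitionIndicator R f := by
  ext i t
  simp only [weightedLaplacian_mul_apply]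
  refine Finset.sum_congr rfl fun j _ => ?_
  by_cases hij : f i = f j
  · simp [partitionIndicator, hij]
  · rw [hEF i j hij]

theorem weightedLaplacian_const_mul_partitionIndicator [Fintype κ] (b : R) (f : V → κ) :
    weightedLaplacian (of fun _ _ : V => b) * partitionIndicator R f =
      partitionIndicator R f * of fun s t =>
        b * (Fintype.card V * (1 : Matrix κ κ R) s t - Finset.card {j | f j = t}) := by
  ext i t
  rw [weightedLaplacian_mul_apply, partitionIndicator_mul]
  simp only [of_apply, submatrix_apply, id_eq, ← Finset.mul_sum, Finset.sum_sub_distrib]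
  simp [partitionIndicator, Matrix.one_apply]

end Laplacian

theorem isExternallyEquitable_partitionIndicator {V κ K : Type*} [Fintype V] [DecidableEq V]
    [Fintype κ] [DecidableEq κ] [Field K] [CharZero K] {E : Matrix V V K} {f : V → κ} {b : K}
    (hf : Function.Surjective f) (hE : ∀ i j, f i ≠ f j → E i j = b) :
    IsExternallyEquitable E (partitionIndicator K f) := by
  rw [isExternallyEquitable_iff_exists_mul (isUnit_det_transpose_partitionIndicator_mul_self hf),
    weightedLaplacian_mul_partitionIndicator_congr (F := of fun _ _ => b) hE]
  exact ⟨_, weightedLaplacian_const_mul_partitionIndicator b f⟩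

theorem every_coarsening_of_planted_partition_is_EEP_general {V ι κ K : Type*}
    [Fintype V] [DecidableEq V] [Fintype ι] [DecidableEq ι] [Fintype κ] [DecidableEq κ]
    [Field K] [CharZero K] {g : V → ι} {m : ι → κ} (hmg : Function.Surjective (m ∘ g))
    {Om : Matrix ι ι K} {b : K} (hOm : Pairwise fun r s => Om r s = b) :
    IsExternallyEquitable (partitionIndicator K g * Om * (partitionIndicator K g)ᵀ)
      (partitionIndicator K g * partitionIndicator K m) := by
  rw [partitionIndicator_mul_partitionIndicator, partitionIndicator_mul,
    mul_transpose_partitionIndicator]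
  exact isExternallyEquitable_partitionIndicator hmg fun i j hij => hOm (ne_of_apply_ne m hij)

/-- Let `E = H Ω Hᵀ` be the expected adjacency matrix of a planted partition
model with affinity `Ω = (a−b)·I + b·𝟙𝟙ᵀ` and partition indicator `H`.  Then every coarsening
`H' = H M` of the planted partition (for any merging partition indicator `M`) is an externally
equitable partition of `E`: `L(E) H' = H' (H'† L(E) H')` — the hierarchy is degenerate. -/
theorem every_coarsening_of_planted_partition_is_EEP
    {n k κ : ℕ} (g : Fin n → Fin k) (hg : Function.Surjective g)
    (m : Fin k → Fin κ) (hm : Function.Surjective m)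
    (a b : ℝ) (ha : 0 ≤ a) (hb : 0 ≤ b)
    (H : Matrix (Fin n) (Fin k) ℝ)
    (hH : H = Matrix.of fun i j => if g i = j then (1 : ℝ) else 0)
    (M : Matrix (Fin k) (Fin κ) ℝ)
    (hM : M = Matrix.of fun r t => if m r = t then (1 : ℝ) else 0)
    (Om : Matrix (Fin k) (Fin k) ℝ)
    (hOm : Om = (a - b) • (1 : Matrix (Fin k) (Fin k) ℝ)
        + b • Matrix.of (fun _ _ : Fin k => (1 : ℝ)))
    (E : Matrix (Fin n) (Fin n) ℝ) (hE : E = H * Om * Hᵀ)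
    (L : Matrix (Fin n) (Fin n) ℝ)
    (hL : L = Matrix.diagonal (fun i => ∑ j, E i j) - E)
    (H' : Matrix (Fin n) (Fin κ) ℝ) (hH' : H' = H * M) :
    L * H' = H' * ((H'ᵀ * H')⁻¹ * H'ᵀ * L * H') := by
  subst hH hM hE hL hH'
  exact every_coarsening_of_planted_partition_is_EEP_general (hm.comp hg) (b := b)
    fun r s hrs => by simp [hOm, hrs]
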